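/- Let D be an (a,b)-semi-hybrid domain on a tree T satisfying diversity. The following are equivalent: (a) every tops-only and strategy-proof rule f : D^2 → A behaves like a dictatorship on ⟨a, b|T⟩; (b) for every n ≥ 2, every tops-only and strategy-proof rule f : D^n → A behaves like a dictatorship on ⟨a, b|T⟩. -/

import Mathlib

open Classical

set_option linter.unusedSectionVars false
set_option linter.unusedVariables false

/-- A strict preference over `A`, represented as a ranking bijection:
`P k` is the `(k+1)`-th ranked alternative. -/
abbrev Pref (A : Type*) [Fintype A] := Fin (Fintype.card A) ≃ A

variable {A : Type*} [Fintype A] [DecidableEq A] [Nonempty A]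

/-- `rk P k` : the `(k+1)`-th ranked alternative of `P` (0-indexed, so `rk P 0 = r₁(P)`). -/
noncomputable def rk (P : Pref A) (k : ℕ) : A :=
  if h : k < Fintype.card A then P ⟨k, h⟩ else Classical.arbitrary A

/-- The peak `r₁(P)`. -/
noncomputable def peak (P : Pref A) : A := rk P 0

/-- The second-ranked alternative `r₂(P)`. -/
noncomputable def second (P : Pref A) : A := rk P 1

/-- `a` is strictly preferred to `b` under `P`. -/
def prefers (P : Pref A) (a b : A) : Prop := P.symm a < P.symm b

/-- Two preferences are completely reversed. -/
def Reversed (P P' : Pref A) : Prop := ∀ a b : A, prefers P a b ↔ prefers P' b a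

/-- A profile lies in the domain `D`. -/
def InDom (D : Set (Pref A)) {n : ℕ} (P : Fin n → Pref A) : Prop := ∀ i, P i ∈ D

/-- Unanimity (an SCF satisfying it is called a rule). -/
def IsRule (D : Set (Pref A)) {n : ℕ} (f : (Fin n → Pref A) → A) : Prop :=
  ∀ P : Fin n → Pref A, InDom D P → ∀ a : A, (∀ i, peak (P i) = a) → f P = a

/-- Strategy-proofness (relative to the domain `D`). -/
def StrategyProof (D : Set (Pref A)) {n : ℕ} (f : (Fin n → Pref A) → A) : Prop :=
  ∀ P : Fin n → Pref A, InDom D P → ∀ i : Fin n, ∀ Q ∈ D,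
    f P = f (Function.update P i Q) ∨ prefers (P i) (f P) (f (Function.update P i Q))

/-- The tops-only property. -/
def TopsOnly (D : Set (Pref A)) {n : ℕ} (f : (Fin n → Pref A) → A) : Prop :=
  ∀ P P' : Fin n → Pref A, InDom D P → InDom D P' →
    (∀ i, peak (P i) = peak (P' i)) → f P = f P'

/-- Anonymity. -/
def Anonymous (D : Set (Pref A)) {n : ℕ} (f : (Fin n → Pref A) → A) : Prop :=
  ∀ P : Fin n → Pref A, InDom D P → ∀ σ : Equiv.Perm (Fin n), f (P ∘ σ) = f P

/-- `f` behaves like a dictatorship on `B`. -/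
def DictatorOn (D : Set (Pref A)) {n : ℕ} (f : (Fin n → Pref A) → A) (B : Set A) : Prop :=
  ∃ i : Fin n, ∀ P : Fin n → Pref A, InDom D P → (∀ j, peak (P j) ∈ B) → f P = peak (P i)

/-- `f` is a dictatorship. -/
def Dictatorship (D : Set (Pref A)) {n : ℕ} (f : (Fin n → Pref A) → A) : Prop :=
  DictatorOn D f Set.univ

/-- A dictatorial domain. -/
def DictatorialDomain (D : Set (Pref A)) : Prop :=
  ∀ n : ℕ, 2 ≤ n → ∀ f : (Fin n → Pref A) → A,
    IsRule D f → StrategyProof D f → Dictatorship D f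

/-- A tops-only domain. -/
def TopsOnlyDomain (D : Set (Pref A)) : Prop :=
  ∀ n : ℕ, 2 ≤ n → ∀ f : (Fin n → Pref A) → A,
    IsRule D f → StrategyProof D f → TopsOnly D f

/-- Adjacency of two alternatives relative to the domain `D`. -/
def DomAdjacent (D : Set (Pref A)) (a b : A) : Prop :=
  ∃ P ∈ D, ∃ P' ∈ D, peak P = a ∧ second P = b ∧ peak P' = b ∧ second P' = a ∧
    ∀ k : ℕ, 2 ≤ k → rk P k = rk P' k

/-- The adjacency graph `G_∼` of the domain `D`. -/
noncomputable def adjGraph (D : Set (Pref A)) : SimpleGraph A :=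
  SimpleGraph.fromRel (DomAdjacent D)

/-- Path-connectedness of the domain. -/
def PathConnectedDom (D : Set (Pref A)) : Prop := (adjGraph D).Connected

/-- Diversity: the domain contains two completely reversed preferences. -/
def Diversity (D : Set (Pref A)) : Prop := ∃ P ∈ D, ∃ P' ∈ D, Reversed P P'

/-- `S(D^a)`: the set of alternatives second-ranked in some preference of `D` with peak `a`. -/
def secondsSet (D : Set (Pref A)) (a : A) : Set A := {b | ∃ P ∈ D, peak P = a ∧ second P = b}

/-- Leaf symmetry. -/
def LeafSymmetry (D : Set (Pref A)) : Prop :=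
  ∀ x : A, (∃! y, (adjGraph D).Adj x y) →
    (∃ u ∈ secondsSet D x, ∃ v ∈ secondsSet D x, u ≠ v) →
    ∃ z ∈ secondsSet D x, ¬ (adjGraph D).Adj x z ∧ x ∈ secondsSet D z

/-- Unidimensionality: path-connectedness, diversity and leaf symmetry. -/
def Unidimensional (D : Set (Pref A)) : Prop :=
  PathConnectedDom D ∧ Diversity D ∧ LeafSymmetry D

/-- The unique seconds property. -/
def UniqueSeconds (D : Set (Pref A)) : Prop := ∃ x b : A, secondsSet D x = {b}

/-- Minimal richness. -/
def MinimallyRich (D : Set (Pref A)) : Prop := ∀ a : A, ∃ P ∈ D, peak P = a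

/-- The vertex set `⟨x, y|T⟩` of the (in a tree, unique) shortest path between `x` and `y`. -/
def intv (T : SimpleGraph A) (x y : A) : Set A :=
  {z | T.dist x z + T.dist z y = T.dist x y}

/-- `a'` is the projection of `a` onto `B` in `T`. -/
def IsProjPt (T : SimpleGraph A) (B : Set A) (a a' : A) : Prop :=
  a' ∈ B ∧ ∀ b ∈ B, a' ∈ intv T a b

/-- The projection `Proj(a, B)` of `a` onto a path-closed set `B` in the tree `T`. -/
noncomputable def projOn (T : SimpleGraph A) (B : Set A) (a : A) : A :=
  if h : ∃ a', IsProjPt T B a a' then h.choose else a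

/-- `Γ(P)`: the vertex set of the minimal subtree of `T` spanning all the peaks. -/
def gammaSet (T : SimpleGraph A) {n : ℕ} (P : Fin n → Pref A) : Set A :=
  {c | ∃ i j : Fin n, c ∈ intv T (peak (P i)) (peak (P j))}

/-- The projection rule on `T` w.r.t. `xbar`. -/
noncomputable def projRule (T : SimpleGraph A) (xbar : A) {n : ℕ}
    (P : Fin n → Pref A) : A :=
  projOn T (gammaSet T P) xbar

/-- Single-peakedness on a tree. -/
def SinglePeaked (T : SimpleGraph A) (P : Pref A) : Prop :=
  ∀ c d : A, c ≠ d → c ∈ intv T (peak P) d → prefers P c d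

/-- Semi-single-peakedness on `T` w.r.t. the threshold `xbar`. -/
def SemiSP (T : SimpleGraph A) (xbar : A) (P : Pref A) : Prop :=
  (∀ c d : A, c ∈ intv T (peak P) xbar → d ∈ intv T (peak P) xbar → c ≠ d →
    c ∈ intv T (peak P) d → prefers P c d) ∧
  (∀ c : A, c ∉ intv T (peak P) xbar →
    prefers P (projOn T (intv T (peak P) xbar) c) c)

/-- A semi-single-peaked domain. -/
def SemiSPDomain (D : Set (Pref A)) : Prop :=
  ∃ (T : SimpleGraph A) (xbar : A), T.IsTree ∧
    D ⊆ {P | SemiSP T xbar P} ∧ (adjGraph D).Connected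

/-- `A^{a⇀b}`: the alternatives whose path to `b` goes through `a`. -/
def sideSet (T : SimpleGraph A) (a b : A) : Set A := {z | a ∈ intv T z b}

/-- `x = max^P(B)`: `x` is `P`'s best alternative of `B`. -/
def IsBestOf (P : Pref A) (x : A) (B : Set A) : Prop :=
  x ∈ B ∧ ∀ y ∈ B, y ≠ x → prefers P x y

/-- `a` and `b` are dual-thresholds in the tree `T`. -/
def DualThresholds (T : SimpleGraph A) (a b : A) : Prop :=
  a ≠ b ∧ ∀ c : A, c ∉ intv T a b →
    projOn T (intv T a b) c = a ∨ projOn T (intv T a b) c = b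

/-- An `(a,b)`-semi-hybrid preference on `T`. -/
def SemiHybridPref (T : SimpleGraph A) (a b : A) (P : Pref A) : Prop :=
  (peak P ∈ sideSet T a b \ {a} → SemiSP T a P ∧ IsBestOf P b (sideSet T b a)) ∧
  (peak P ∈ sideSet T b a \ {b} → SemiSP T b P ∧ IsBestOf P a (sideSet T a b)) ∧
  (peak P ∈ intv T a b → IsBestOf P a (sideSet T a b) ∧ IsBestOf P b (sideSet T b a))

/-- `x` is a leaf of the subgraph of `G` induced on `B`. -/
def IsLeafOn (G : SimpleGraph A) (B : Set A) (x : A) : Prop :=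
  x ∈ B ∧ ∃! y, y ∈ B ∧ G.Adj x y

/-- `D` is an `(a,b)`-semi-hybrid domain on the tree `T`. -/
def SemiHybridDomainOn (D : Set (Pref A)) (T : SimpleGraph A) (a b : A) : Prop :=
  T.IsTree ∧ DualThresholds T a b ∧ D ⊆ {P | SemiHybridPref T a b P} ∧
  (adjGraph D).Connected ∧
  (¬ ∃ (T' : SimpleGraph A) (a' b' : A), T'.IsTree ∧ DualThresholds T' a' b' ∧
      D ⊆ {P | SemiHybridPref T' a' b' P} ∧ intv T' a' b' ⊂ intv T a b) ∧
  ((adjGraph D).IsTree →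
    ∀ x : A, IsLeafOn (adjGraph D) (intv T a b) x →
      ∃ P ∈ D, ¬ SemiSP (adjGraph D) x P)

/-- `D` is a semi-hybrid domain. -/
def SemiHybridDomain (D : Set (Pref A)) : Prop :=
  ∃ (T : SimpleGraph A) (a b : A), SemiHybridDomainOn D T a b

/-- An `(a,b)`-hybrid preference on `T`. -/
def HybridPref (T : SimpleGraph A) (a b : A) (P : Pref A) : Prop :=
  (∀ y z : A, ((y ∈ sideSet T a b ∧ z ∈ sideSet T a b) ∨
      (y ∈ sideSet T b a ∧ z ∈ sideSet T b a)) → y ≠ z →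
    y ∈ intv T (peak P) z → prefers P y z) ∧
  (peak P ∈ sideSet T a b \ {a} → IsBestOf P a (intv T a b)) ∧
  (peak P ∈ sideSet T b a \ {b} → IsBestOf P b (intv T a b))

/-- `D` is an `(a,b)`-hybrid domain on the tree `T`. -/
def HybridDomainOn (D : Set (Pref A)) (T : SimpleGraph A) (a b : A) : Prop :=
  T.IsTree ∧ DualThresholds T a b ∧ D ⊆ {P | HybridPref T a b P} ∧
  (adjGraph D).Connected ∧
  (¬ ∃ (T' : SimpleGraph A) (a' b' : A), T'.IsTree ∧ DualThresholds T' a' b' ∧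
      D ⊆ {P | HybridPref T' a' b' P} ∧ intv T' a' b' ⊂ intv T a b) ∧
  3 ≤ (intv T a b).ncard

/-- `f` is an `(a,b)`-hybrid rule on the tree `T`. -/
def IsHybridRule (D : Set (Pref A)) {n : ℕ} (f : (Fin n → Pref A) → A)
    (T : SimpleGraph A) (a b : A) : Prop :=
  T.IsTree ∧ DualThresholds T a b ∧ 3 ≤ (intv T a b).ncard ∧
  ∃ i : Fin n, ∀ P : Fin n → Pref A, InDom D P →
    (peak (P i) ∈ intv T a b → f P = peak (P i)) ∧
    (peak (P i) ∈ sideSet T a b \ {a} → f P = projOn T (gammaSet T P) a) ∧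
    (peak (P i) ∈ sideSet T b a \ {b} → f P = projOn T (gammaSet T P) b)

/-- The PNT rule on `T` w.r.t. the edge `(x, y)`, with the two distinguished voters `i, j`. -/
noncomputable def pntRule (T : SimpleGraph A) (x y : A) {n : ℕ} (i j : Fin n)
    (P : Fin n → Pref A) : A :=
  if peak (P i) ∈ sideSet T y x then peak (P i)
  else if peak (P j) ∈ sideSet T x y then projOn T (gammaSet T P) x
  else if prefers (P j) x y then x else y

/-- `(x, y)` is a critical spot in `T` for the domain `D`. -/
def CriticalSpot (D : Set (Pref A)) (T : SimpleGraph A) (x y : A) : Prop :=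
  T.Adj x y ∧
  (∀ P ∈ D, peak P ∈ sideSet T x y → SemiSP T y P) ∧
  (∀ P ∈ D, peak P ∈ sideSet T y x → IsBestOf P x (sideSet T x y)) ∧
  (∃ P ∈ D, ∃ P' ∈ D, peak P = peak P' ∧ peak P ∈ sideSet T y x ∧
    prefers P y x ∧ prefers P' x y)

/-- `x` is a path in the graph `G` (pairwise distinct, consecutive vertices adjacent). -/
def IsPathIn (G : SimpleGraph A) {v : ℕ} (x : Fin v → A) : Prop :=
  Function.Injective x ∧
  ∀ (k : ℕ) (h : k + 1 < v), G.Adj (x ⟨k, Nat.lt_of_succ_lt h⟩) (x ⟨k + 1, h⟩)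

/-- `x` is a cycle in the graph `G`. -/
def IsCycleIn (G : SimpleGraph A) {v : ℕ} (x : Fin v → A) : Prop :=
  Function.Injective x ∧
  (∀ (k : ℕ) (h : k + 1 < v), G.Adj (x ⟨k, Nat.lt_of_succ_lt h⟩) (x ⟨k + 1, h⟩)) ∧
  ∀ (h : 0 < v), G.Adj (x ⟨v - 1, Nat.sub_lt h Nat.one_pos⟩) (x ⟨0, h⟩)

/-- The line `L^A` induced by the ranking of the preference `P`. -/
noncomputable def lineOf (P : Pref A) : SimpleGraph A :=
  SimpleGraph.fromRel (fun a b =>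
    ∃ k : ℕ, k + 1 < Fintype.card A ∧ rk P k = a ∧ rk P (k + 1) = b)

/-- The median of three natural numbers. -/
def med3 (a b c : ℕ) : ℕ := max (min a b) (min (max a b) c)

/-- The two-voter profile in which voter `i` reports `Pi` and the other voter reports `Q`. -/
noncomputable def prof2 (i : Fin 2) (Pi Q : Pref A) : Fin 2 → Pref A :=
  Function.update (fun _ => Q) i Pi

/-! ### Facts about trees -/

theorem mem_intv {T : SimpleGraph A} {x y z : A} :
    z ∈ intv T x y ↔ T.dist x z + T.dist z y = T.dist x y := Iff.rfl

theorem intv_comm (T : SimpleGraph A) (x y : A) : intv T x y = intv T y x := by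
  ext z
  rw [mem_intv, mem_intv, T.dist_comm (u := x) (v := z), T.dist_comm (u := z) (v := y),
    T.dist_comm (u := x) (v := y)]
  omega

theorem mem_intv_of_mem_support {T : SimpleGraph A} {x y z : A} (p : T.Walk x y)
    (hp : p.length = T.dist x y) (hT : T.Connected) (hz : z ∈ p.support) : z ∈ intv T x y := by
  rw [mem_intv]
  have h1 := T.dist_le (p.takeUntil z hz)
  have h2 := T.dist_le (p.dropUntil z hz)
  have h3 : (p.takeUntil z hz).length + (p.dropUntil z hz).length = p.length := by
    rw [← SimpleGraph.Walk.length_append, SimpleGraph.Walk.take_spec]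
  have h4 := hT.dist_triangle (u := x) (v := z) (w := y)
  omega

theorem dist_of_isPath {T : SimpleGraph A} (hT : T.IsTree) {x y : A} (p : T.Walk x y)
    (hp : p.IsPath) : p.length = T.dist x y := by
  obtain ⟨q, hq, hl⟩ := hT.1.exists_path_of_dist x y
  rw [(hT.existsUnique_path x y).unique hp hq, hl]

theorem tree_glue {T : SimpleGraph A} (hT : T.IsTree) {x m a : A}
    (h : ∀ v, v ∈ intv T x m → v ∈ intv T m a → v = m) : m ∈ intv T x a := by
  obtain ⟨p, hp, hpl⟩ := hT.1.exists_path_of_dist x m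
  obtain ⟨q, hq, hql⟩ := hT.1.exists_path_of_dist m a
  have hpath : (p.append q).IsPath := by
    rw [SimpleGraph.Walk.isPath_def, SimpleGraph.Walk.support_append, List.nodup_append']
    have hqn := (SimpleGraph.Walk.isPath_def q).1 hq
    rw [← SimpleGraph.Walk.cons_tail_support, List.nodup_cons] at hqn
    refine ⟨(SimpleGraph.Walk.isPath_def p).1 hp, hqn.2, ?_⟩
    intro v hv hv'
    have h1 := mem_intv_of_mem_support p hpl hT.1 hv
    have h2 := mem_intv_of_mem_support q hql hT.1 (List.mem_of_mem_tail hv')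
    exact hqn.1 (h v h1 h2 ▸ hv')
  have := dist_of_isPath hT _ hpath
  rw [SimpleGraph.Walk.length_append] at this
  rw [mem_intv]; omega

theorem tree_split {T : SimpleGraph A} (hT : T.IsTree) {x m m' a : A}
    (hm : m ∈ intv T x a) (hm' : m' ∈ intv T x a) : m' ∈ intv T x m ∨ m' ∈ intv T m a := by
  obtain ⟨p, hp, hpl⟩ := hT.1.exists_path_of_dist x m
  obtain ⟨q, hq, hql⟩ := hT.1.exists_path_of_dist m a
  obtain ⟨p', hp', hpl'⟩ := hT.1.exists_path_of_dist x m'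
  obtain ⟨q', hq', hql'⟩ := hT.1.exists_path_of_dist m' a
  rw [mem_intv] at hm hm'
  have h1 : (p.append q).IsPath := SimpleGraph.Walk.isPath_of_length_eq_dist _ (by
    rw [SimpleGraph.Walk.length_append]; omega)
  have h2 : (p'.append q').IsPath := SimpleGraph.Walk.isPath_of_length_eq_dist _ (by
    rw [SimpleGraph.Walk.length_append]; omega)
  have h3 := (hT.existsUnique_path x a).unique h1 h2
  have h4 : m' ∈ (p.append q).support := by rw [h3]; simp
  rw [SimpleGraph.Walk.mem_support_append_iff] at h4
  rcases h4 with h4 | h4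
  · exact Or.inl (mem_intv_of_mem_support p hpl hT.1 h4)
  · exact Or.inr (mem_intv_of_mem_support q hql hT.1 h4)

/-- `m` is a median of `x, y, a`. -/
def IsMed (T : SimpleGraph A) (m x y a : A) : Prop :=
  m ∈ intv T x y ∧ m ∈ intv T x a ∧ m ∈ intv T y a

theorem IsMed.symm {T : SimpleGraph A} {m x y a : A} (h : IsMed T m x y a) : IsMed T m y x a :=
  ⟨intv_comm T x y ▸ h.1, h.2.2, h.2.1⟩

theorem eq_of_intv_self {T : SimpleGraph A} (hT : T.IsTree) {x m : A} (h : m ∈ intv T x x) :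
    m = x := by
  rw [mem_intv, T.dist_self] at h
  have : T.dist x m = 0 := by omega
  exact (hT.1.dist_eq_zero_iff.1 this).symm

theorem exists_med {T : SimpleGraph A} (hT : T.IsTree) (x y a : A) : ∃ m, IsMed T m x y a := by
  have hne : (Finset.univ.filter (fun m => m ∈ intv T x y)).Nonempty :=
    ⟨x, by simp [mem_intv]⟩
  obtain ⟨m, hm, hmin⟩ := Finset.exists_min_image _ (fun m => T.dist m a) hne
  simp only [Finset.mem_filter, Finset.mem_univ, true_and] at hm hmin
  have tri := fun u v w => hT.1.dist_triangle (u := u) (v := v) (w := w)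
  have key : ∀ x y, m ∈ intv T x y → (∀ v ∈ intv T x y, T.dist m a ≤ T.dist v a) →
      m ∈ intv T x a := by
    intro x y hm hmin
    apply tree_glue hT
    intro v hv hv'
    rw [mem_intv] at hv hv' hm
    have h1 : v ∈ intv T x y := by
      rw [mem_intv]
      have := tri x v y
      have := tri v m y
      omega
    have h2 := hmin v h1
    have : T.dist m v = 0 := by omega
    exact (hT.1.dist_eq_zero_iff.1 this).symm
  refine ⟨m, hm, key x y hm hmin, ?_⟩
  rw [intv_comm T x y] at hm hmin
  exact key y x hm hmin

theorem projOn_eq {T : SimpleGraph A} (hT : T.IsTree) {B : Set A} {c m : A}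
    (h : IsProjPt T B c m) : projOn T B c = m := by
  have hex : ∃ a', IsProjPt T B c a' := ⟨m, h⟩
  unfold projOn
  rw [dif_pos hex]
  have h' := hex.choose_spec
  generalize hex.choose = m' at h' ⊢
  have h1 := h.2 _ h'.1
  have h2 := h'.2 _ h.1
  rw [mem_intv] at h1 h2
  have : T.dist m' m = 0 := by omega
  exact hT.1.dist_eq_zero_iff.1 this

theorem semiSP_med {T : SimpleGraph A} (hT : T.IsTree) {a x x' y m m' : A} {P : Pref A}
    (hP : SemiSP T a P) (hx : peak P = x) (hm : IsMed T m x y a) (hm' : IsMed T m' x' y a) :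
    m = m' ∨ prefers P m m' := by
  by_cases hne : m = m'
  · exact Or.inl hne
  right
  obtain ⟨h1, h2, h3⟩ := hm
  have h3' := hm'.2.2
  subst hx
  have tri := fun u v w => hT.1.dist_triangle (u := u) (v := v) (w := w)
  have com := fun u v => T.dist_comm (u := u) (v := v)
  have z := fun u v => hT.1.dist_eq_zero_iff (u := u) (v := v)
  by_cases hin : m' ∈ intv T (peak P) a
  · refine hP.1 m m' h2 hin hne ?_
    rcases tree_split hT h2 hin with h | h
    · exfalso
      apply hne
      apply (z m m').1
      rw [mem_intv] at *
      have := tri (peak P) m' y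
      have := com m m'
      have := com m y
      have := com m' y
      omega
    · rw [mem_intv] at *
      have := tri (peak P) m m'
      omega
  · have := hP.2 m' hin
    rwa [projOn_eq hT (m := m)] at this
    have hs : m' ∈ intv T y m := by
      rcases tree_split hT h3 h3' with h | h
      · exact h
      · exfalso
        apply hin
        rw [mem_intv] at *
        have := tri (peak P) m m'
        have := tri (peak P) m' a
        omega
    refine ⟨h2, fun v hv => ?_⟩
    rw [mem_intv] at hs h1 h3 h3'
    have e1 : T.dist m' (peak P) = T.dist m' m + T.dist m (peak P) := by
      have := tri y m' (peak P)
      have := tri m' m (peak P)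
      have := com y (peak P)
      have := com y m
      have := com m (peak P)
      omega
    have e2 : T.dist m' a = T.dist m' m + T.dist m a := by
      have := tri y m' a
      have := tri m' m a
      omega
    have t1 := tri m' m v
    rcases tree_split hT h2 hv with h | h
    · rw [mem_intv] at *
      have := tri m' v (peak P)
      have := com v (peak P)
      have := com m (peak P)
      have := com v m
      omega
    · rw [mem_intv] at *
      have := tri m' v a
      omega

/-! ### Preferences -/

/-- Weak preference. -/
def WP (P : Pref A) (u v : A) : Prop := u = v ∨ prefers P u v

theorem WP.trans {P : Pref A} {u v w : A} (h : WP P u v) (h' : WP P v w) : WP P u w := by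
  rcases h with rfl | h
  · exact h'
  · rcases h' with rfl | h'
    · exact Or.inr h
    · exact Or.inr (lt_trans h h')

theorem WP.antisymm {P : Pref A} {u v : A} (h : WP P u v) (h' : WP P v u) : u = v := by
  rcases h with rfl | h
  · rfl
  · rcases h' with rfl | h'
    · rfl
    · exact absurd (lt_trans h h') (lt_irrefl _)

theorem symm_peak (P : Pref A) : (P.symm (peak P)).val = 0 := by
  have h : 0 < Fintype.card A := Fintype.card_pos
  simp [peak, rk, h]

theorem symm_second (hcard : 3 ≤ Fintype.card A) (P : Pref A) :
    (P.symm (second P)).val = 1 := by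
  have h : 1 < Fintype.card A := by omega
  simp [second, rk, h]

theorem wp_peak (P : Pref A) (y : A) : WP P (peak P) y := by
  by_cases h : peak P = y
  · exact Or.inl h
  · right
    have h1 : P.symm (peak P) ≠ P.symm y := fun e => h (P.symm.injective e)
    have h2 := symm_peak P
    unfold prefers
    rw [Fin.lt_def]
    rw [Ne, Fin.ext_iff] at h1
    omega

theorem eq_peak_of_prefers_second (hcard : 3 ≤ Fintype.card A) {P : Pref A} {y : A}
    (h : prefers P y (second P)) : y = peak P := by
  unfold prefers at h
  rw [Fin.lt_def, symm_second hcard] at h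
  apply P.symm.injective
  apply Fin.ext
  rw [symm_peak]
  omega

theorem domAdjacent_of_adj {D : Set (Pref A)} {x y : A} (h : (adjGraph D).Adj x y) :
    DomAdjacent D x y := by
  rcases ((SimpleGraph.fromRel_adj _ _ _).1 h).2 with h | ⟨P, hP, P', hP', h1, h2, h3, h4, h5⟩
  · exact h
  · exact ⟨P', hP', P, hP, h3, h4, h1, h2, fun k hk => (h5 k hk).symm⟩

theorem rich_of_connected {D : Set (Pref A)} (hcard : 3 ≤ Fintype.card A)
    (hG : (adjGraph D).Connected) (x : A) : ∃ P ∈ D, peak P = x := by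
  have : Nontrivial A := Fintype.one_lt_card_iff_nontrivial.1 (by omega)
  obtain ⟨y, hy⟩ := hG.preconnected.exists_adj_of_nontrivial x
  obtain ⟨P, hP, _, _, h, _⟩ := domAdjacent_of_adj hy
  exact ⟨P, hP, h⟩

theorem swap_step {P P' : Pref A} (hcard : 3 ≤ Fintype.card A) {x x' : A}
    (h1 : peak P = x) (h2 : second P = x') (h3 : peak P' = x') (h4 : second P' = x)
    (h5 : ∀ k : ℕ, 2 ≤ k → rk P k = rk P' k) {w u : A} (hw : w ≠ x)
    (hwu : WP P w u) (huw : WP P' u w) : u = w := by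
  rcases hwu with e | hwu
  · exact e.symm
  rcases huw with e | huw
  · exact e
  exfalso
  have s1 := symm_peak P
  have s2 := symm_second hcard P
  have s3 := symm_peak P'
  have s4 := symm_second hcard P'
  rw [h1] at s1; rw [h2] at s2; rw [h3] at s3; rw [h4] at s4
  have key : ∀ v : A, v ≠ x → v ≠ x' → P'.symm v = P.symm v := by
    intro v hv hv'
    have n0 : (P.symm v).val ≠ 0 := fun e =>
      hv (P.symm.injective (Fin.ext (by rw [e, s1])))
    have n1 : (P.symm v).val ≠ 1 := fun e =>
      hv' (P.symm.injective (Fin.ext (by rw [e, s2])))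
    have := h5 (P.symm v).val (by omega)
    simp only [rk, (P.symm v).isLt, dite_true, Fin.eta, Equiv.apply_symm_apply] at this
    rw [Equiv.symm_apply_eq]
    exact this
  unfold prefers at hwu huw
  by_cases hwx : w = x'
  · subst hwx
    rw [Fin.lt_def, s3] at huw
    omega
  · have hu1 : u ≠ x := by
      rintro rfl
      rw [Fin.lt_def, s1] at hwu
      omega
    have hu2 : u ≠ x' := by
      rintro rfl
      rw [Fin.lt_def, s2] at hwu
      apply hw
      apply P.symm.injective
      apply Fin.ext
      omega
    rw [key u hu1 hu2, key w hw hwx] at huw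
    exact absurd (lt_trans hwu huw) (lt_irrefl _)

/-- Strategy-proofness of a function of one peak (other voters fixed). -/
def SP1 (D : Set (Pref A)) (h : A → A) : Prop :=
  ∀ P ∈ D, ∀ x' : A, WP P (h (peak P)) (h x')

theorem SP1.step {D : Set (Pref A)} (hcard : 3 ≤ Fintype.card A) {h : A → A} (hh : SP1 D h)
    {x x' : A} (hadj : (adjGraph D).Adj x x') (hw : h x ≠ x) : h x' = h x := by
  obtain ⟨P, hP, P', hP', h1, h2, h3, h4, h5⟩ := domAdjacent_of_adj hadj
  have e1 := hh P hP x'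
  have e2 := hh P' hP' x
  rw [h1] at e1
  rw [h3] at e2
  exact swap_step hcard h1 h2 h3 h4 h5 hw e1 e2

theorem SP1.retract {D : Set (Pref A)} (hcard : 3 ≤ Fintype.card A)
    (hG : (adjGraph D).Connected) {h : A → A} (hh : SP1 D h) (r : A → A)
    (hr : ∀ s t, (adjGraph D).Adj s t → r s = r t ∨ (adjGraph D).Adj (r s) (r t))
    {w : A} (hw : ∀ s, r s ≠ w) (u v : A) (hu : h (r u) = w) : h (r v) = w := by
  obtain ⟨p⟩ := hG.preconnected u v
  induction p with
  | nil => exact hu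
  | cons hadj p ih =>
    apply ih
    rcases hr _ _ hadj with e | e
    · rw [← e]; exact hu
    · rw [← hu]
      exact hh.step hcard e (by rw [hu]; exact (hw _).symm)

/-! ### Structure of semi-hybrid domains -/

/-- The properties of the `a`-side `S` which are used in the argument. -/
structure SideFacts (D : Set (Pref A)) (T : SimpleGraph A) (S : Set A) (a : A) : Prop where
  mem : a ∈ S
  best : ∀ P ∈ D, peak P ∉ S → ∀ y ∈ S, WP P a y
  out : ∀ P ∈ D, peak P ∈ S → ∀ y, y ∉ S → WP P a y
  edge : ∀ s t, (adjGraph D).Adj s t → s ∈ S → s ≠ a → t ∈ S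
  med : ∀ P ∈ D, ∀ x' y m m', peak P ∈ S → IsMed T m (peak P) y a → IsMed T m' x' y a → WP P m m'
  medS : ∀ x y m, x ∈ S → IsMed T m x y a → m ∈ S

theorem dualThresholds_symm {T : SimpleGraph A} {a b : A} (h : DualThresholds T a b) :
    DualThresholds T b a := by
  refine ⟨h.1.symm, fun c hc => ?_⟩
  rw [intv_comm T b a] at hc ⊢
  exact (h.2 c hc).symm

theorem semiHybridPref_symm {T : SimpleGraph A} {a b : A} {P : Pref A}
    (h : SemiHybridPref T a b P) : SemiHybridPref T b a P := by
  refine ⟨h.2.1, h.1, fun hp => ?_⟩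
  rw [intv_comm T b a] at hp
  exact (h.2.2 hp).symm

theorem cover {T : SimpleGraph A} {a b : A} (h : DualThresholds T a b) (z : A) :
    z ∈ sideSet T a b ∨ z ∈ sideSet T b a ∨ z ∈ intv T a b := by
  by_cases hz : z ∈ intv T a b
  · exact Or.inr (Or.inr hz)
  have ha : a ∈ intv T a b := by simp [mem_intv]
  have hb : b ∈ intv T a b := by simp [mem_intv]
  by_cases hex : ∃ a', IsProjPt T (intv T a b) z a'
  · have h2 := h.2 z hz
    unfold projOn at h2
    rw [dif_pos hex] at h2
    have h' := hex.choose_spec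
    rcases h2 with h2 | h2
    · rw [h2] at h'
      exact Or.inl (h'.2 b hb)
    · rw [h2] at h'
      exact Or.inr (Or.inl (h'.2 a ha))
  · exfalso
    have h2 := h.2 z hz
    unfold projOn at h2
    rw [dif_neg hex] at h2
    rcases h2 with rfl | rfl
    · exact hz ha
    · exact hz hb

theorem mem_sideSet {T : SimpleGraph A} {a b z : A} :
    z ∈ sideSet T a b ↔ T.dist z a + T.dist a b = T.dist z b := Iff.rfl

theorem side_disj {T : SimpleGraph A} (hT : T.IsTree) {a b z : A} (hab : a ≠ b)
    (h1 : z ∈ sideSet T a b) (h2 : z ∈ sideSet T b a) : False := by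
  rw [mem_sideSet] at h1 h2
  have : T.dist a b = 0 := by omega
  exact hab (hT.1.dist_eq_zero_iff.1 this)

theorem side_intv {T : SimpleGraph A} (hT : T.IsTree) {a b z : A}
    (h1 : z ∈ sideSet T a b) (h2 : z ∈ intv T a b) : z = a := by
  rw [mem_sideSet] at h1
  rw [mem_intv, T.dist_comm (u := a) (v := z)] at h2
  have : T.dist z a = 0 := by omega
  exact hT.1.dist_eq_zero_iff.1 this

/-- Points of `⟨x,a⟩` with `x` on the `a`-side are on the `a`-side. -/
theorem side_closed {T : SimpleGraph A} (hT : T.IsTree) {a b x v : A}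
    (hx : x ∈ sideSet T a b) (hv : v ∈ intv T x a) : v ∈ sideSet T a b := by
  rw [mem_sideSet] at *
  rw [mem_intv] at hv
  have := hT.1.dist_triangle (u := x) (v := v) (w := b)
  have := hT.1.dist_triangle (u := v) (v := a) (w := b)
  omega

theorem side_sep {T : SimpleGraph A} (hT : T.IsTree) {a b x c : A} (h : DualThresholds T a b)
    (hx : x ∈ sideSet T a b) (hc : c ∉ sideSet T a b) : a ∈ intv T x c := by
  apply tree_glue hT
  intro v hv hv'
  have hvS := side_closed hT hx hv
  rcases cover h c with hc' | hc' | hc'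
  · exact absurd hc' hc
  · have hb : b ∈ intv T a c := by rw [intv_comm]; exact hc'
    rcases tree_split hT hb hv' with h1 | h1
    · exact side_intv hT hvS h1
    · rw [intv_comm] at h1
      exact (side_disj hT h.1 hvS (side_closed hT hc' h1)).elim
  · apply side_intv hT hvS
    rw [mem_intv] at *
    have := hT.1.dist_triangle (u := a) (v := v) (w := b)
    have := hT.1.dist_triangle (u := v) (v := c) (w := b)
    omega

theorem sideFacts {D : Set (Pref A)} {T : SimpleGraph A} {a b : A} (hcard : 3 ≤ Fintype.card A)
    (hT : T.IsTree) (h : DualThresholds T a b) (hD : ∀ P ∈ D, SemiHybridPref T a b P) :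
    SideFacts D T (sideSet T a b) a := by
  have ha : a ∈ sideSet T a b := by simp [mem_sideSet]
  have hout : ∀ P ∈ D, peak P ∈ sideSet T a b → ∀ y, y ∉ sideSet T a b → WP P a y := by
    intro P hP hp y hy
    by_cases hpa : peak P = a
    · rw [← hpa]; exact wp_peak P y
    · have hs := ((hD P hP).1 ⟨hp, hpa⟩).1
      have hny : y ∉ intv T (peak P) a := fun hy' => hy (side_closed hT hp hy')
      have := hs.2 y hny
      rw [projOn_eq hT (m := a)] at this
      · exact Or.inr this
      refine ⟨by simp [mem_intv], fun v hv => ?_⟩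
      rw [intv_comm]
      exact side_sep hT h (side_closed hT hp hv) hy
  refine ⟨ha, ?_, hout, ?_, ?_, ?_⟩
  · intro P hP hp y hy
    have hbest : IsBestOf P a (sideSet T a b) := by
      by_cases hB : peak P ∈ intv T a b
      · exact ((hD P hP).2.2 hB).1
      · rcases cover h (peak P) with hc | hc | hc
        · exact absurd hc hp
        · refine ((hD P hP).2.1 ⟨hc, ?_⟩).2
          intro e
          apply hB
          rw [Set.mem_singleton_iff] at e
          rw [e]; simp [mem_intv]
        · exact absurd hc hB
    by_cases hya : y = a
    · exact Or.inl hya.symm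
    · exact Or.inr (hbest.2 y hy hya)
  · intro s t hst hs hsa
    by_contra ht
    obtain ⟨P, hP, P', hP', h1, h2, h3, h4, h5⟩ := domAdjacent_of_adj hst
    have := hout P hP (h1 ▸ hs) t ht
    rcases this with e | e
    · exact ht (e ▸ ha)
    · rw [← h2] at e
      exact hsa ((eq_peak_of_prefers_second hcard e).trans h1).symm
  · intro P hP x' y m m' hp hm hm'
    by_cases hpa : peak P = a
    · have : m = a := eq_of_intv_self hT (hpa ▸ hm.2.1)
      rw [this, ← hpa]
      exact wp_peak P m'
    · exact semiSP_med hT ((hD P hP).1 ⟨hp, hpa⟩).1 rfl hm hm'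
  · intro x y m hx hm
    exact side_closed hT hx hm.2.1

section Ramification

/-! ### The key construction -/

/-- All the structural facts about an `(a,b)`-semi-hybrid domain which are used. -/
structure HybFacts (D : Set (Pref A)) (T : SimpleGraph A) (SA SB B : Set A) (a b : A) : Prop where
  card : 3 ≤ Fintype.card A
  conn : (adjGraph D).Connected
  fa : SideFacts D T SA a
  fb : SideFacts D T SB b
  cov : ∀ z, z ∈ SA ∨ z ∈ SB ∨ z ∈ B
  disj : ∀ z, z ∈ SA → z ∈ SB → False
  aB : a ∈ B
  bB : b ∈ B
  ab : a ≠ b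
  SAB : ∀ z, z ∈ SA → z ∈ B → z = a
  SBB : ∀ z, z ∈ SB → z ∈ B → z = b

/-- Retraction onto the free zone. -/
noncomputable def pr (SA SB : Set A) (a b z : A) : A :=
  if z ∈ SA then a else if z ∈ SB then b else z

/-- Retraction onto a side. -/
noncomputable def rs (S : Set A) (a z : A) : A := if z ∈ S then z else a

variable {D : Set (Pref A)} {T : SimpleGraph A} {SA SB B : Set A} {a b : A}

theorem pr_A (z : A) (hz : z ∈ SA) : pr SA SB a b z = a := by simp [pr, hz]

theorem pr_B (H : HybFacts D T SA SB B a b) (z : A) (hz : z ∈ SB) : pr SA SB a b z = b := by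
  have : z ∉ SA := fun h => H.disj z h hz
  simp [pr, hz, this]

theorem pr_id (H : HybFacts D T SA SB B a b) (z : A) (hz : z ∈ B) : pr SA SB a b z = z := by
  unfold pr
  split_ifs with h1 h2
  · exact (H.SAB z h1 hz).symm
  · exact (H.SBB z h2 hz).symm
  · rfl

theorem pr_mem (H : HybFacts D T SA SB B a b) (z : A) : pr SA SB a b z ∈ B := by
  rcases H.cov z with h | h | h
  · rw [pr_A z h]; exact H.aB
  · rw [pr_B H z h]; exact H.bB
  · rw [pr_id H z h]; exact h

theorem pr_edge (H : HybFacts D T SA SB B a b) (s t : A) (hst : (adjGraph D).Adj s t) :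
    pr SA SB a b s = pr SA SB a b t ∨
      (adjGraph D).Adj (pr SA SB a b s) (pr SA SB a b t) := by
  have key : ∀ s t, (adjGraph D).Adj s t → s ∉ B → pr SA SB a b s = pr SA SB a b t := by
    intro s t hst hs
    rcases H.cov s with h | h | h
    · have := H.fa.edge s t hst h (fun e => hs (e ▸ H.aB))
      rw [pr_A s h, pr_A t this]
    · have := H.fb.edge s t hst h (fun e => hs (e ▸ H.bB))
      rw [pr_B H s h, pr_B H t this]
    · exact absurd h hs
  by_cases hs : s ∈ B
  · by_cases ht : t ∈ B
    · right
      rw [pr_id H s hs, pr_id H t ht]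
      exact hst
    · exact Or.inl (key t s hst.symm ht).symm
  · exact Or.inl (key s t hst hs)

theorem rs_edge {S : Set A} (H : SideFacts D T S a) (s t : A) (hst : (adjGraph D).Adj s t) :
    rs S a s = rs S a t ∨ (adjGraph D).Adj (rs S a s) (rs S a t) := by
  unfold rs
  split_ifs with h1 h2 h2
  · exact Or.inr hst
  · left
    by_contra e
    exact h2 (H.edge s t hst h1 e)
  · left
    by_contra e
    exact h1 (H.edge t s hst.symm h2 (fun h => e h.symm))
  · exact Or.inl rfl

/-- If the outcome at a free-zone report is off the free zone, then it does not change. -/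
theorem SP1.const_out (H : HybFacts D T SA SB B a b) {h : A → A} (hh : SP1 D h) {x y : A}
    (hx : x ∈ B) (hy : y ∈ B) (hw : h x ∉ B) : h y = h x := by
  have := hh.retract H.card H.conn (pr SA SB a b) (pr_edge H) (w := h x)
    (fun s e => hw (e ▸ pr_mem H s)) x y (by rw [pr_id H x hx])
  rwa [pr_id H y hy] at this

theorem SP1.side {S : Set A} (hcard : 3 ≤ Fintype.card A) (hG : (adjGraph D).Connected)
    (H : SideFacts D T S a) {h : A → A} (hh : SP1 D h) {x : A}
    (hx : x ∈ S) (hw : h a ∉ S) : h x = h a := by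
  have := hh.retract hcard hG (rs S a) (rs_edge H) (w := h a)
    (fun s e => hw (by
      rw [← e]; unfold rs
      split_ifs with h
      · exact h
      · exact H.mem)) a x (by simp [rs, H.mem])
  simpa [rs, hx] using this

theorem SP1.comp_pr (H : HybFacts D T SA SB B a b) {h : A → A} (hh : SP1 D h)
    (hB : ∀ x ∈ B, h x ∈ B) : SP1 D (fun x => h (pr SA SB a b x)) := by
  intro P hP x'
  have hw' := hB _ (pr_mem H x')
  rcases H.cov (peak P) with hp | hp | hp
  · simp only [pr_A (peak P) hp]
    by_cases e : h a = a
    · rw [e]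
      by_cases hs : h (pr SA SB a b x') ∈ SA
      · exact Or.inl (H.SAB _ hs hw').symm
      · exact H.fa.out P hP hp _ hs
    · have : h a ∉ SA := fun hs => e (H.SAB _ hs (hB a H.aB))
      rw [← hh.side H.card H.conn H.fa hp this]
      exact hh P hP _
  · simp only [pr_B H (peak P) hp]
    by_cases e : h b = b
    · rw [e]
      by_cases hs : h (pr SA SB a b x') ∈ SB
      · exact Or.inl (H.SBB _ hs hw').symm
      · exact H.fb.out P hP hp _ hs
    · have : h b ∉ SB := fun hs => e (H.SBB _ hs (hB b H.bB))
      rw [← hh.side H.card H.conn H.fb hp this]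
      exact hh P hP _
  · simp only [pr_id H (peak P) hp]
    exact hh P hP _

theorem isMed_end (T : SimpleGraph A) (y a : A) : IsMed T a a y a := by
  refine ⟨?_, ?_, ?_⟩ <;> simp [mem_intv]

theorem SP1.extend (H : HybFacts D T SA SB B a b) {h M N : A → A} {y : A} (hh : SP1 D h)
    (hB : ∀ x ∈ B, h x ∈ B) (hyA : y ∈ SA → ∀ x ∈ B, h x = a) (hyB : y ∈ SB → h b = b)
    (hM : ∀ x, IsMed T (M x) x y a) (hN : ∀ x, IsMed T (N x) x y b) :
    SP1 D (fun x => if x ∈ SA ∧ y ∈ SA then M x else if x ∈ SB ∧ y ∈ SB then N x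
      else h (pr SA SB a b x)) := by
  have hcomp := hh.comp_pr H hB
  intro P hP x'
  simp only
  by_cases yA : y ∈ SA
  · have yB : y ∉ SB := fun h => H.disj y yA h
    simp only [yA, yB, and_true, and_false, if_false]
    rw [hyA yA _ (pr_mem H _), hyA yA _ (pr_mem H _)]
    by_cases hp : peak P ∈ SA
    · rw [if_pos hp]
      split_ifs with hx'
      · exact H.fa.med P hP x' y _ _ hp (hM _) (hM _)
      · exact H.fa.med P hP a y _ _ hp (hM _) (isMed_end T y a)
    · rw [if_neg hp]
      split_ifs with hx'
      · exact H.fa.best P hP hp _ (H.fa.medS x' y _ hx' (hM x'))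
      · exact Or.inl rfl
  · simp only [yA, and_false, if_false]
    by_cases yB : y ∈ SB
    · simp only [yB, and_true]
      by_cases hp : peak P ∈ SB
      · rw [if_pos hp]
        split_ifs with hx'
        · exact H.fb.med P hP x' y _ _ hp (hN _) (hN _)
        · refine (H.fb.med P hP b y _ _ hp (hN _) (isMed_end T y b)).trans ?_
          by_cases hs : h (pr SA SB a b x') ∈ SB
          · exact Or.inl (H.SBB _ hs (hB _ (pr_mem H _))).symm
          · exact H.fb.out P hP hp _ hs
      · rw [if_neg hp]
        split_ifs with hx'
        · have h1 := hcomp P hP b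
          simp only [pr_id H b H.bB, hyB yB] at h1
          exact h1.trans (H.fb.best P hP hp _ (H.fb.medS x' y _ hx' (hN x')))
        · exact hcomp P hP x'
    · simp only [yB, and_false, if_false]
      exact hcomp P hP _

/-- The two-voter hypothesis, phrased on peaks. -/
def Hyp2 (D : Set (Pref A)) (B : Set A) : Prop :=
  ∀ g : A → A → A, (∀ y, SP1 D (fun x => g x y)) → (∀ x, SP1 D (fun y => g x y)) →
    (∀ x, g x x = x) →
    (∀ x ∈ B, ∀ y ∈ B, g x y = x) ∨ (∀ x ∈ B, ∀ y ∈ B, g x y = y)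

theorem no_majority (hT : T.IsTree) (H : HybFacts D T SA SB B a b) (h2 : Hyp2 D B)
    (F : A → A → A) (s1 : ∀ y, SP1 D (fun x => F x y)) (s2 : ∀ x, SP1 D (fun y => F x y))
    (hFa : ∀ y ∈ B, F a y = a) (hFa' : ∀ x ∈ B, F x a = a) (hu : ∀ x ∈ B, F x x = x) : False := by
  have hFB : ∀ x ∈ B, ∀ y ∈ B, F x y ∈ B := by
    intro x hx y hy
    by_contra hn
    have e1 := (s1 y).const_out H hx hy hn
    rw [hu y hy] at e1
    exact hn (e1 ▸ hy)
  choose mA hmA using fun x y => exists_med hT x y a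
  choose mB hmB using fun x y => exists_med hT x y b
  let p := pr SA SB a b
  let g : A → A → A := fun x y => if x ∈ SA ∧ y ∈ SA then mA x y
    else if x ∈ SB ∧ y ∈ SB then mB x y else F (p x) (p y)
  have g1 : ∀ y, SP1 D (fun x => g x y) := by
    intro y
    refine SP1.extend H (s1 (p y)) (fun x hx => hFB x hx _ (pr_mem H y)) ?_ ?_
      (fun x => hmA x y) (fun x => hmB x y)
    · intro hy x hx
      simp only [p, pr_A y hy]
      exact hFa' x hx
    · intro hy
      simp only [p, pr_B H y hy]
      exact hu b H.bB
  have g2 : ∀ x, SP1 D (fun y => g x y) := by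
    intro x
    have := SP1.extend H (h := fun y => F (p x) y) (y := x) (M := mA x) (N := mB x) (s2 (p x))
      (fun y hy => hFB _ (pr_mem H x) y hy) (by
        intro hx y hy
        simp only [p, pr_A x hx]
        exact hFa y hy) (by
        intro hx
        simp only [p, pr_B H x hx]
        exact hu b H.bB) (fun y => (hmA x y).symm) (fun y => (hmB x y).symm)
    simpa only [g, p, and_comm (a := x ∈ SA), and_comm (a := x ∈ SB)] using this
  have g3 : ∀ x, g x x = x := by
    intro x
    simp only [g, and_self]
    split_ifs with h1 h3
    · exact eq_of_intv_self hT (hmA x x).1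
    · exact eq_of_intv_self hT (hmB x x).1
    · rw [hu _ (pr_mem H x)]
      simp [pr, h1, h3]
  have nb : b ∉ SA := fun h => H.disj b h H.fb.mem
  have na : a ∉ SB := fun h => H.disj a H.fa.mem h
  rcases h2 g g1 g2 g3 with h | h
  · have := h b H.bB a H.aB
    simp only [g, p, nb, na, false_and, and_false, if_false, pr_id H a H.aB, pr_id H b H.bB,
      hFa' b H.bB] at this
    exact H.ab this
  · have := h a H.aB b H.bB
    simp only [g, p, nb, na, false_and, and_false, if_false, pr_id H a H.aB, pr_id H b H.bB,
      hFa b H.bB] at this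
    exact H.ab this

/-! ### Many voters -/

/-- Strategy-proofness of a function of the peaks. -/
def SPn (D : Set (Pref A)) {n : ℕ} (φ : (Fin n → A) → A) : Prop :=
  ∀ x i, SP1 D (fun y => φ (Function.update x i y))

theorem SPn.group {n : ℕ} {φ : (Fin n → A) → A} (hφ : SPn D φ) {P : Pref A} (hP : P ∈ D)
    (S : Finset (Fin n)) : ∀ x x' : Fin n → A, (∀ i ∈ S, x i = peak P) →
      (∀ i ∉ S, x i = x' i) → WP P (φ x) (φ x') := by
  induction S using Finset.induction_on with
  | empty =>
    intro x x' _ h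
    left
    congr 1
    funext i
    exact h i (by simp)
  | insert j S hj ih =>
    intro x x' h1 h2
    have e1 := hφ x j P hP (x' j)
    have e : Function.update x j (peak P) = x := by
      rw [← h1 j (by simp)]; simp
    simp only [e] at e1
    refine e1.trans (ih _ _ ?_ ?_)
    · intro i hi
      have : i ≠ j := fun e => hj (e ▸ hi)
      rw [Function.update_of_ne this]
      exact h1 i (by simp [hi])
    · intro i hi
      by_cases hij : i = j
      · subst hij; simp
      · rw [Function.update_of_ne hij]
        exact h2 i (by simp [hi, hij])

/-- If the outcome is `w`, then changing reports to `w` leaves it unchanged. -/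
theorem SPn.mono {n : ℕ} {φ : (Fin n → A) → A} (hφ : SPn D φ)
    (hrich : ∀ x : A, ∃ P ∈ D, peak P = x) {w : A} (x x' : Fin n → A)
    (hx : φ x = w) (h : ∀ i, x' i = x i ∨ x' i = w) : φ x' = w := by
  obtain ⟨P, hP, hp⟩ := hrich w
  have := hφ.group hP (Finset.univ.filter fun i => x' i = w) x' x (by simp [hp]) (by
    intro i hi
    simp only [Finset.mem_filter, Finset.mem_univ, true_and] at hi
    exact (h i).resolve_right hi)
  rw [hx, ← hp] at this
  rw [← hp]
  exact this.antisymm (wp_peak P _)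

theorem dict_of_SPn (hT : T.IsTree) (H : HybFacts D T SA SB B a b) (h2 : Hyp2 D B)
    {n : ℕ} (φ : (Fin n → A) → A) (hφ : SPn D φ) (hu : ∀ x, φ (fun _ => x) = x) :
    ∃ i, ∀ x : Fin n → A, (∀ j, x j ∈ B) → φ x = x i := by
  have hrich := rich_of_connected H.card H.conn
  let h : Finset (Fin n) → A → A → A := fun S x y => φ (fun i => if i ∈ S then x else y)
  -- each coalition or its complement is decisive
  have hdich : ∀ S, (∀ x ∈ B, ∀ y ∈ B, h S x y = x) ∨ (∀ x ∈ B, ∀ y ∈ B, h S x y = y) := by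
    intro S
    apply h2
    · intro y P hP x'
      refine hφ.group hP S _ _ ?_ ?_
      · intro i hi; simp [hi]
      · intro i hi; simp [hi]
    · intro x P hP y'
      refine hφ.group hP Sᶜ _ _ ?_ ?_
      · intro i hi; simp at hi; simp [hi]
      · intro i hi; simp at hi; simp [hi]
    · intro x
      simp only [h, ite_self]
      exact hu x
  let W : Finset (Fin n) → Prop := fun S => ∀ x ∈ B, ∀ y ∈ B, h S x y = x
  have hWab : ∀ S, h S a b = a → W S := by
    intro S hS
    rcases hdich S with h | h
    · exact h
    · exact absurd (hS.symm.trans (h a H.aB b H.bB)) H.ab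
  have hWc : ∀ S, W S ∨ W Sᶜ := by
    intro S
    rcases hdich S with h | h'
    · exact Or.inl h
    · right
      intro x hx y hy
      have := h' y hy x hx
      simpa [h] using this
  have hWmono : ∀ S S', S ⊆ S' → W S → W S' := by
    intro S S' hSS hS
    apply hWab
    refine hφ.mono hrich _ _ (hS a H.aB b H.bB) ?_
    intro i
    by_cases hi : i ∈ S
    · right; simp [hSS hi]
    · by_cases hi' : i ∈ S'
      · right; simp [hi']
      · left; simp [hi, hi']
  have hWinter : ∀ S S', W S → W S' → W (S ∩ S') := by
    intro S S' hS hS'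
    by_contra hn
    have hc : W (S ∩ S')ᶜ := (hWc _).resolve_left hn
    -- split the voters into three blocks
    let F : A → A → A := fun x y => φ (fun i => if i ∈ S then (if i ∈ S' then x else y) else a)
    refine no_majority hT H h2 F ?_ ?_ ?_ ?_ ?_
    · intro y P hP x'
      refine hφ.group hP (S ∩ S') _ _ ?_ ?_
      · intro i hi; simp at hi; simp [hi.1, hi.2]
      · intro i hi
        simp only [Finset.mem_inter, not_and] at hi
        by_cases h1 : i ∈ S
        · simp [h1, hi h1]
        · simp [h1]
    · intro x P hP y'
      refine hφ.group hP (S \ S') _ _ ?_ ?_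
      · intro i hi; simp at hi; simp [hi.1, hi.2]
      · intro i hi
        simp only [Finset.mem_sdiff, not_and, not_not] at hi
        by_cases h1 : i ∈ S
        · simp [h1, hi h1]
        · simp [h1]
    · intro y hy
      have h1 : W (S \ S')ᶜ := hWmono S' _ (by
        intro i hi
        simp [hi]) hS'
      have := h1 a H.aB y hy
      refine Eq.trans ?_ this
      simp only [F, h]
      congr 1
      funext i
      by_cases e1 : i ∈ S <;> by_cases e2 : i ∈ S' <;> simp [e1, e2]
    · intro x hx
      have := hc a H.aB x hx
      refine Eq.trans ?_ this
      simp only [F, h]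
      congr 1
      funext i
      by_cases e1 : i ∈ S <;> by_cases e2 : i ∈ S' <;> simp [e1, e2]
    · intro x hx
      have := hS x hx a H.aB
      refine Eq.trans ?_ this
      simp only [F, h]
      congr 1
      funext i
      by_cases e1 : i ∈ S <;> by_cases e2 : i ∈ S' <;> simp [e1, e2]
  have hWuniv : W Finset.univ := by
    apply hWab
    simp only [h, Finset.mem_univ, if_true]
    exact hu a
  have hWempty : ¬ W ∅ := by
    intro hE
    have := hE a H.aB b H.bB
    simp only [h, Finset.notMem_empty, if_false] at this
    rw [hu b] at this
    exact H.ab this.symm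
  obtain ⟨S, hS, hmin⟩ := Finset.exists_min_image (Finset.univ.filter W) Finset.card
    ⟨Finset.univ, by simp [hWuniv]⟩
  simp only [Finset.mem_filter, Finset.mem_univ, true_and] at hS hmin
  have hsub : ∀ S', W S' → S ⊆ S' := by
    intro S' hS'
    have h1 := hmin _ (hWinter S S' hS hS')
    have h3 := Finset.eq_of_subset_of_card_le (Finset.inter_subset_left (s₁ := S) (s₂ := S')) h1
    rw [← h3]
    exact Finset.inter_subset_right
  have hne : S.Nonempty := by
    rw [Finset.nonempty_iff_ne_empty]
    rintro rfl
    exact hWempty hS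
  obtain ⟨i, hi⟩ := hne
  have hWi : W {i} := by
    rcases hWc {i} with h | h
    · exact h
    · have := hsub _ h hi
      simp at this
  refine ⟨i, fun x hx => ?_⟩
  by_contra hne
  have hwB : φ x ∈ B := by
    by_contra hw
    -- move everybody to `b`
    have key : ∀ U : Finset (Fin n), φ (fun j => if j ∈ U then b else x j) = φ x := by
      intro U
      induction U using Finset.induction_on with
      | empty => simp
      | insert j U hj ih =>
        have e0 : (fun k => if k ∈ U then b else x k) =
            Function.update (fun k => if k ∈ U then b else x k) j (x j) := by
          funext k
          by_cases hk : k = j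
          · subst hk; simp [hj]
          · simp [hk]
        have e1 : (fun k => if k ∈ insert j U then b else x k) =
            Function.update (fun k => if k ∈ U then b else x k) j b := by
          funext k
          by_cases hk : k = j
          · subst hk; simp
          · simp [hk]
        rw [e0] at ih
        have := (hφ (fun k => if k ∈ U then b else x k) j).const_out H (hx j) H.bB
          (by rw [ih]; exact hw)
        rw [e1]
        exact this.trans ih
    have := key Finset.univ
    simp only [Finset.mem_univ, if_true, hu b] at this
    exact hw (this ▸ H.bB)
  have h1 := hφ.mono hrich x (fun j => if j ∈ ({i} : Finset (Fin n)) then x i else φ x) rfl (by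
    intro j
    by_cases hj : j = i
    · left; subst hj; simp
    · right; simp [hj])
  have h3 := hWi (x i) (hx i) (φ x) hwB
  exact hne (h1.symm.trans h3)

theorem hyp2_of (hrich : ∀ x : A, ∃ P ∈ D, peak P = x)
    (h : ∀ f : (Fin 2 → Pref A) → A, IsRule D f → TopsOnly D f → StrategyProof D f →
        DictatorOn D f B) : Hyp2 D B := by
  intro g g1 g2 g3
  choose q hqD hq using hrich
  obtain ⟨i, hi⟩ := h (fun P => g (peak (P 0)) (peak (P 1))) (by
      intro P _ c hc
      simp only [hc]
      exact g3 c) (by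
      intro P P' _ _ e
      simp only [e]) (by
      intro P hP i Q hQ
      fin_cases i
      · have := g1 (peak (P 1)) (P 0) (hP 0) (peak Q)
        simpa [Function.update, WP] using this
      · have := g2 (peak (P 0)) (P 1) (hP 1) (peak Q)
        simpa [Function.update, WP] using this)
  have key : ∀ x ∈ B, ∀ y ∈ B, g x y = peak ((![q x, q y] : Fin 2 → Pref A) i) := by
    intro x hx y hy
    rw [← hi]
    · simp [hq]
    · intro j; fin_cases j <;> simp [hqD]
    · intro j; fin_cases j <;> simp [hq, hx, hy]
  fin_cases i
  · left
    intro x hx y hy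
    rw [key x hx y hy]
    simp [hq]
  · right
    intro x hx y hy
    rw [key x hx y hy]
    simp [hq]

theorem dict_of_hyp2 (hT : T.IsTree) (H : HybFacts D T SA SB B a b) (h2 : Hyp2 D B)
    {n : ℕ} (f : (Fin n → Pref A) → A) (f1 : IsRule D f) (f2 : TopsOnly D f)
    (f3 : StrategyProof D f) : DictatorOn D f B := by
  choose q hqD hq using rich_of_connected H.card H.conn
  obtain ⟨i, hi⟩ := dict_of_SPn hT H h2 (fun x => f (fun i => q (x i))) (by
      intro x i P hP y
      have hdom : InDom D (Function.update (fun j => q (x j)) i P) := by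
        intro j
        by_cases hj : j = i
        · subst hj; simpa using hP
        · simpa [hj] using hqD _
      have := f3 _ hdom i (q y) (hqD y)
      rw [Function.update_self, Function.update_idem] at this
      have e1 : f (Function.update (fun j => q (x j)) i P) =
          f (fun j => q (Function.update x i (peak P) j)) := by
        apply f2 _ _ hdom (fun j => hqD _)
        intro j
        by_cases hj : j = i
        · subst hj; simp [hq]
        · simp [hj]
      have e2 : Function.update (fun j => q (x j)) i (q y) =
          (fun j => q (Function.update x i y j)) := by
        funext j
        by_cases hj : j = i
        · subst hj; simp
        · simp [hj]
      rw [e1, e2] at this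
      exact this) (by
      intro x
      exact f1 _ (fun j => hqD _) x (fun j => hq _))
  refine ⟨i, fun P hP hPB => ?_⟩
  rw [← hi (fun j => peak (P j)) hPB]
  exact f2 _ _ hP (fun j => hqD _) (fun j => (hq _).symm)

theorem hybFacts_of (hcard : 3 ≤ Fintype.card A) (hsh : SemiHybridDomainOn D T a b) :
    HybFacts D T (sideSet T a b) (sideSet T b a) (intv T a b) a b := by
  obtain ⟨hT, hdt, hD, hG, -, -⟩ := hsh
  refine ⟨hcard, hG, sideFacts hcard hT hdt hD,
    sideFacts hcard hT (dualThresholds_symm hdt) (fun P hP => semiHybridPref_symm (hD hP)),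
    cover hdt, fun z => side_disj hT hdt.1, by simp [mem_intv], by simp [mem_intv], hdt.1,
    fun z => side_intv hT, fun z h1 h2 => side_intv hT h1 (intv_comm T a b ▸ h2)⟩

end Ramification

/-- Ramification Theorem: on an `(a,b)`-semi-hybrid domain
satisfying diversity, all two-voter tops-only strategy-proof rules behave like
dictatorships on the free zone iff for every `n ≥ 2` all `n`-voter tops-only
strategy-proof rules do. -/
theorem stmt7_ramification (D : Set (Pref A)) (hD : D.Nonempty)
    (hcard : 3 ≤ Fintype.card A)
    (T : SimpleGraph A) (a b : A) (hsh : SemiHybridDomainOn D T a b)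
    (hdiv : Diversity D) :
    (∀ f : (Fin 2 → Pref A) → A, IsRule D f → TopsOnly D f → StrategyProof D f →
        DictatorOn D f (intv T a b)) ↔
    (∀ n : ℕ, 2 ≤ n → ∀ f : (Fin n → Pref A) → A,
        IsRule D f → TopsOnly D f → StrategyProof D f →
        DictatorOn D f (intv T a b)) := by
  constructor
  · intro h n hn f f1 f2 f3
    exact dict_of_hyp2 hsh.1 (hybFacts_of hcard hsh)
      (hyp2_of (rich_of_connected hcard hsh.2.2.2.1) h) f f1 f2 f3
  · intro h
    exact h 2 le_rfl
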